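/- arXiv:2401.10086 — 2 statements merged into one kernel-verified Lean document; each statement's English description precedes it below -/
import Mathlib

section
/- For every ε > 0 there exists a constant C = C(ε) such that for all real H ≥ 2 and all monic polynomials f ∈ ℚ[X] of degree 2, the number of 2×2 matrices with all entries in F(H) whose characteristic polynomial equals f is at most C·H^{2+ε}. -/
/-- The set of rationals `a/b` in lowest terms with `|a| ≤ H` and `1 ≤ b ≤ H`. -/
def Farey (H : ℝ) : Set ℚ := {x : ℚ | |(x.num : ℝ)| ≤ H ∧ (x.den : ℝ) ≤ H}

/-!
A matrix with rows `(a, b)`, `(c, d)` and characteristic polynomial `f` is determined by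
`y = a - d`, `b` and `c`, and these satisfy `y ^ 2 + 4 * b * c = Δ` with `Δ` the discriminant
of `f`. The solutions with `b * c = 0` number `O(H ^ 2)`, since `y ^ 2 = Δ` leaves two values
of `y`.

For the others, write the product of the denominators of `b` and `c` as `w ^ 2 * g` with `g`
squarefree. For two solutions with the same `w` and `g`, the rationals `u = w * y` and
`u' = w * y'` satisfy `g * (u - u') * (u + u') ∈ ℤ`; as `g` is squarefree, `u - u'` and `u + u'`
have coprime denominators. Fixing `u'`, the denominator of `u - u'` therefore divides that of `u'`,
and any two `u ≥ 0` for which it is the same differ by an integer. As `u ^ 2` lies in an interval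
of length `O(H ^ 2 / g)`, there are `O(H ^ (1 + ε) / √g)` values of `y`, each with `O(H ^ ε)` pairs
`(b, c)` by the divisor bound. Summing over `w ≤ H / √g` and then over `g ≤ H ^ 2` gives
`H ^ (2 + ε)` times a harmonic sum.
-/

open Finset

section DivisorBound

lemma natCast_add_one_le_mul_pow {K : Type*} [Field K] [LinearOrder K] [IsStrictOrderedRing K]
    {r : K} (hr : 1 < r) (k : ℕ) : (k : K) + 1 ≤ r / (r - 1) * r ^ k := by
  have hr' : 0 < r - 1 := sub_pos.2 hr
  have one_add_le : 1 + k * (r - 1) ≤ r ^ k := one_add_mul_sub_le_pow (by linarith) k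
  have one_le : 1 ≤ r ^ k := one_le_pow₀ hr.le
  rw [div_mul_eq_mul_div, le_div_iff₀ hr']
  nlinarith

lemma natCast_add_one_le_pow {K : Type*} [Field K] [LinearOrder K] [IsStrictOrderedRing K]
    {r : K} (hr : 2 ≤ r) (k : ℕ) : (k : K) + 1 ≤ r ^ k := by
  have one_add_le : 1 + k * (r - 1) ≤ r ^ k := one_add_mul_sub_le_pow (by linarith) k
  nlinarith [Nat.cast_nonneg (α := K) k]

lemma natCast_rpow_eq_prod_primeFactors {n : ℕ} (hn : n ≠ 0) (δ : ℝ) :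
    (n : ℝ) ^ δ = ∏ p ∈ n.primeFactors, ((p : ℝ) ^ δ) ^ n.factorization p := by
  conv_lhs => rw [← Nat.prod_factorization_pow_eq_self hn]
  rw [Finsupp.prod, Nat.support_factorization, Nat.cast_prod,
    ← Real.finsetProd_rpow _ _ fun _ _ => Nat.cast_nonneg _]
  refine prod_congr rfl fun p _ => ?_
  rw [Nat.cast_pow, Real.rpow_pow_comm p.cast_nonneg]

lemma exists_card_divisors_le_rpow {δ : ℝ} (hδ : 0 < δ) :
    ∃ C : ℝ, ∀ n : ℕ, (#n.divisors : ℝ) ≤ C * (n : ℝ) ^ δ := by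
  set r : ℝ := 2 ^ δ
  have hr : 1 < r := Real.one_lt_rpow one_lt_two hδ
  set c : ℝ := r / (r - 1)
  have hc : 1 ≤ c := (one_le_div (sub_pos.2 hr)).2 (sub_le_self r zero_le_one)
  -- Primes `p ≥ M` satisfy `p ^ δ ≥ 2`, so only the primes below `M` cost a factor `c`.
  set M : ℕ := ⌈(2 : ℝ) ^ δ⁻¹⌉₊
  have factor_le (n p : ℕ) (hp : p ∈ n.primeFactors) : (n.factorization p : ℝ) + 1 ≤
      (if p < M then c else 1) * ((p : ℝ) ^ δ) ^ n.factorization p := by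
    split_ifs with hpM
    · have hrp : r ≤ (p : ℝ) ^ δ := Real.rpow_le_rpow zero_le_two
        (mod_cast (Nat.prime_of_mem_primeFactors hp).two_le) hδ.le
      exact (natCast_add_one_le_mul_pow hr _).trans (by gcongr)
    · have two_le : 2 ≤ (p : ℝ) ^ δ := by
        rw [← Real.rpow_inv_le_iff_of_pos zero_le_two p.cast_nonneg hδ]
        exact Nat.ceil_le.1 (not_lt.1 hpM)
      simpa only [one_mul] using natCast_add_one_le_pow two_le _
  refine ⟨c ^ M, fun n => ?_⟩
  rcases eq_or_ne n 0 with rfl | hn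
  · simp [Real.zero_rpow hδ.ne']
  calc (#n.divisors : ℝ) = ∏ p ∈ n.primeFactors, ((n.factorization p : ℝ) + 1) := by
        rw [Nat.card_divisors hn]; push_cast; rfl
    _ ≤ ∏ p ∈ n.primeFactors,
          (if p < M then c else 1) * ((p : ℝ) ^ δ) ^ n.factorization p :=
        prod_le_prod (fun _ _ => by positivity) (factor_le n)
    _ = c ^ #{p ∈ n.primeFactors | p < M} * (n : ℝ) ^ δ := by
        rw [prod_mul_distrib, ← natCast_rpow_eq_prod_primeFactors hn, ← prod_filter, prod_const]
    _ ≤ c ^ M * (n : ℝ) ^ δ := by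
        have card_le : #{p ∈ n.primeFactors | p < M} ≤ M :=
          (card_le_card fun p hp => mem_range.2 (mem_filter.1 hp).2).trans_eq (card_range M)
        gcongr

/-- The largest number of divisors of a natural number `n ≤ X`. -/
def maxCardDivisors (X : ℕ) : ℕ := (range (X + 1)).sup fun n => #n.divisors

lemma card_divisors_le_maxCardDivisors {n X : ℕ} (h : n ≤ X) :
    #n.divisors ≤ maxCardDivisors X :=
  le_sup (f := fun n => #n.divisors) (mem_range_succ_iff.2 h)

lemma exists_maxCardDivisors_le_rpow {δ : ℝ} (hδ : 0 < δ) :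
    ∃ C ≥ (0 : ℝ), ∀ X : ℕ, (maxCardDivisors X : ℝ) ≤ C * (X : ℝ) ^ δ := by
  obtain ⟨C, hC⟩ := exists_card_divisors_le_rpow hδ
  have hC0 : 0 ≤ C := by simpa using (Nat.cast_nonneg _).trans (hC 1)
  refine ⟨C, hC0, fun X => ?_⟩
  have le_floor : maxCardDivisors X ≤ ⌊C * (X : ℝ) ^ δ⌋₊ := Finset.sup_le fun n hn =>
    Nat.le_floor <| (hC n).trans <| by
      gcongr
      exact mem_range_succ_iff.1 hn
  exact (Nat.cast_le.2 le_floor).trans (Nat.floor_le (by positivity))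

end DivisorBound

section RationalPoints

lemma card_le_of_one_le_abs_sub {K : Type*} [Field K] [LinearOrder K] [IsStrictOrderedRing K]
    [FloorSemiring K] {T : Finset K} {R : ℕ}
    (hsep : ∀ x ∈ T, ∀ y ∈ T, x ≠ y → 1 ≤ |x - y|) (hdiam : ∀ x ∈ T, ∀ y ∈ T, x - y < R) :
    #T ≤ R := by
  rcases T.eq_empty_or_nonempty with rfl | hT
  · simp
  set m := T.min' hT
  have sub_min_nonneg {x} (hx : x ∈ T) : 0 ≤ x - m := sub_nonneg.2 (T.min'_le x hx)
  rw [← card_range R]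
  refine card_le_card_of_injOn (fun x => ⌊x - m⌋₊) (fun x hx => ?_) fun x hx y hy hxy => ?_
  · exact mem_coe.2 <| mem_range.2 <|
      (Nat.floor_lt (sub_min_nonneg hx)).2 (hdiam x hx m (T.min'_mem hT))
  · by_contra hne
    refine (hsep x hx y hy hne).not_gt ?_
    have hx₁ := Nat.floor_le (sub_min_nonneg hx)
    have hx₂ := Nat.lt_floor_add_one (x - m)
    have hy₁ := Nat.floor_le (sub_min_nonneg hy)
    have hy₂ := Nat.lt_floor_add_one (y - m)
    simp only at hxy
    rw [hxy] at hx₁ hx₂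
    exact abs_sub_lt_iff.2 ⟨by linarith, by linarith⟩

lemma card_le_two_mul_card_image_abs {G : Type*} [AddCommGroup G] [LinearOrder G]
    [IsOrderedAddMonoid G] (T : Finset G) : #T ≤ 2 * #(T.image abs) := by
  refine card_le_mul_card_image T 2 fun a _ => ?_
  calc #{x ∈ T | |x| = a} ≤ #{a, -a} := card_le_card fun x hx => by
        obtain ⟨-, rfl⟩ := mem_filter.1 hx
        simpa using (abs_choice x).imp Eq.symm fun h => by rw [h, neg_neg]
    _ ≤ 2 := card_le_two

lemma coprime_den_of_squarefree {g : ℕ} (hg : Squarefree g) {x y : ℚ}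
    (h : (g * x * y).den = 1) : x.den.Coprime y.den := by
  refine Nat.coprime_of_dvd fun p hp hx hy => ?_
  set z := (g * x * y).num
  have num_eq : g * (x.num.natAbs * y.num.natAbs) = z.natAbs * (x.den * y.den) := by
    have : (g : ℤ) * (x.num * y.num) = z * (x.den * y.den) := by
      have hz : (z : ℚ) = g * x * y := (Rat.den_eq_one_iff _).1 h
      qify
      rw [hz, ← Rat.mul_den_eq_num x, ← Rat.mul_den_eq_num y]
      ring
    simpa only [Int.natAbs_mul, Int.natAbs_natCast] using congrArg Int.natAbs this
  have sq_dvd : p * p ∣ g * (x.num.natAbs * y.num.natAbs) :=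
    num_eq ▸ (mul_dvd_mul hx hy).mul_left _
  have hpx : p.Coprime x.num.natAbs := (x.reduced.coprime_dvd_right hx).symm
  have hpy : p.Coprime y.num.natAbs := (y.reduced.coprime_dvd_right hy).symm
  have coprime : (p * p).Coprime (x.num.natAbs * y.num.natAbs) :=
    (hpx.mul_right hpy).mul_left (hpx.mul_right hpy)
  exact hp.not_isUnit (hg p (coprime.dvd_of_dvd_mul_right sq_dvd))

lemma den_sub_dvd_den_of_coprime {x y : ℚ} (h : (x - y).den.Coprime (x + y).den) :
    (x - y).den ∣ y.den := by
  have dvd_mul : (x - y).den ∣ (x + y).den * (2 * y).den := by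
    simpa only [show x + y - 2 * y = x - y by ring] using Rat.sub_den_dvd (x + y) (2 * y)
  have dvd_two_mul : (2 * y).den ∣ y.den := by simpa using Rat.mul_den_dvd 2 y
  exact (h.dvd_of_dvd_mul_left dvd_mul).trans dvd_two_mul

lemma den_sub_eq_one_of_coprime {x y z : ℚ} (hx : (x - z).den.Coprime (x + z).den)
    (hy : (y - z).den.Coprime (y + z).den) (hxy : (x - z).den = (y - z).den) :
    (x - y).den = 1 := by
  refine Nat.eq_one_of_dvd_coprimes (hx.mul_right (hxy ▸ hy)) ?_ ?_
  · simpa [hxy] using Rat.sub_den_dvd_lcm (x - z) (y - z)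
  · simpa using Rat.sub_den_dvd (x + z) (y + z)

lemma one_le_abs_of_den_eq_one {x : ℚ} (hx : x.den = 1) (h0 : x ≠ 0) : 1 ≤ |x| := by
  rw [← (Rat.den_eq_one_iff x).1 hx]
  exact_mod_cast Int.one_le_abs (Rat.num_ne_zero.2 h0)

variable {U : Finset ℚ} {g τ R : ℕ}

lemma card_le_of_nonneg_of_den_sq_sub_sq (hg : Squarefree g) (h0 : ∀ u ∈ U, 0 ≤ u)
    (hτ : ∀ u ∈ U, #u.den.divisors ≤ τ)
    (hden : ∀ u ∈ U, ∀ v ∈ U, (g * (u ^ 2 - v ^ 2)).den = 1)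
    (hR : ∀ u ∈ U, ∀ v ∈ U, u ^ 2 - v ^ 2 < R ^ 2) :
    #U ≤ τ * R := by
  rcases U.eq_empty_or_nonempty with rfl | ⟨z, hz⟩
  · simp
  have coprime {u} (hu : u ∈ U) : (u - z).den.Coprime (u + z).den :=
    coprime_den_of_squarefree hg <| by
      simpa only [show (g : ℚ) * (u - z) * (u + z) = g * (u ^ 2 - z ^ 2) by ring]
        using hden u hu z hz
  have maps_to : ∀ u ∈ U, (u - z).den ∈ z.den.divisors := fun u hu =>
    Nat.mem_divisors.2 ⟨den_sub_dvd_den_of_coprime (coprime hu), z.den_nz⟩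
  have fiber_le : ∀ d ∈ z.den.divisors, #{u ∈ U | (u - z).den = d} ≤ R := by
    rintro d -
    refine card_le_of_one_le_abs_sub (fun u hu v hv huv => ?_) fun u hu v hv => ?_ <;>
      obtain ⟨hu, hud⟩ := mem_filter.1 hu <;> obtain ⟨hv, hvd⟩ := mem_filter.1 hv
    · exact one_le_abs_of_den_eq_one
        (den_sub_eq_one_of_coprime (coprime hu) (coprime hv) (hud.trans hvd.symm))
        (sub_ne_zero.2 huv)
    · nlinarith [hR u hu v hv, h0 u hu, h0 v hv, Nat.cast_nonneg (α := ℚ) R]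
  calc #U ≤ R * #z.den.divisors := card_le_mul_card_image_of_maps_to maps_to R fiber_le
    _ ≤ R * τ := by gcongr; exact hτ z hz
    _ = τ * R := mul_comm R τ

lemma card_le_of_den_sq_sub_sq (hg : Squarefree g) (hτ : ∀ u ∈ U, #u.den.divisors ≤ τ)
    (hden : ∀ u ∈ U, ∀ v ∈ U, (g * (u ^ 2 - v ^ 2)).den = 1)
    (hR : ∀ u ∈ U, ∀ v ∈ U, u ^ 2 - v ^ 2 < R ^ 2) :
    #U ≤ 2 * (τ * R) := by
  have den_abs (u : ℚ) : |u|.den = u.den := by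
    rcases abs_choice u with h | h <;> rw [h]
    exact Rat.den_neg_eq_den u
  refine (card_le_two_mul_card_image_abs U).trans (Nat.mul_le_mul_left 2 ?_)
  refine card_le_of_nonneg_of_den_sq_sub_sq hg ?_ ?_ ?_ ?_
  · simp only [forall_mem_image, abs_nonneg, implies_true]
  all_goals simpa only [forall_mem_image, sq_abs, den_abs]

lemma card_le_card_divisors_mul_card_divisors {B : Finset ℚ} {Q : ℕ} {P : ℤ} (hQ : Q ≠ 0)
    (hP : P ≠ 0) (hden : ∀ b ∈ B, b.den ∣ Q) (hnum : ∀ b ∈ B, b.num ∣ P) :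
    #B ≤ #Q.divisors * #P.divisors := by
  rw [← card_product]
  refine card_le_card_of_injOn (fun b => (b.den, b.num)) (fun b hb => ?_) fun b _ b' _ h => ?_
  · simpa [hQ, hP] using And.intro (hden b hb) (hnum b hb)
  · exact Rat.ext (congrArg Prod.snd h) (congrArg Prod.fst h)

lemma card_int_divisors (z : ℤ) : #z.divisors = 2 * #z.natAbs.divisors := by
  rw [Int.divisors, card_disjUnion, card_map, card_map, two_mul]

end RationalPoints

section DiscriminantTriples

/-- The rationals `a / b` in lowest terms with `|a| ≤ N` and `1 ≤ b ≤ N`, as a finset: the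
set `F(H)` of the theorem for `N = ⌊H⌋`. -/
noncomputable def fareyFinset (N : ℕ) : Finset ℚ :=
  {p ∈ Icc (-N : ℤ) N ×ˢ Icc (1 : ℤ) N | p.1.natAbs.Coprime p.2.natAbs}.image fun p => p.1 / p.2

lemma mem_fareyFinset {N : ℕ} {x : ℚ} : x ∈ fareyFinset N ↔ x.num.natAbs ≤ N ∧ x.den ≤ N := by
  simp only [fareyFinset, mem_image, mem_filter, mem_product, mem_Icc, Prod.exists]
  constructor
  · rintro ⟨a, b, ⟨⟨ha, hb⟩, hab⟩, rfl⟩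
    have hb0 : 0 < b := by omega
    have num_eq := Rat.num_div_eq_of_coprime hb0 hab
    have den_eq := Rat.den_div_eq_of_coprime hb0 hab
    omega
  · rintro ⟨hnum, hden⟩
    have := x.den_pos
    exact ⟨x.num, x.den, ⟨by omega, x.reduced⟩, by exact_mod_cast Rat.num_div_den x⟩

lemma card_fareyFinset_le (N : ℕ) : #(fareyFinset N) ≤ 3 * N ^ 2 := by
  calc #(fareyFinset N) ≤ #(Icc (-N : ℤ) N ×ˢ Icc (1 : ℤ) N) :=
        card_image_le.trans (card_filter_le _ _)
    _ = (2 * N + 1) * N := by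
        rw [card_product, Int.card_Icc, Int.card_Icc]
        congr 1 <;> omega
    _ ≤ 3 * N ^ 2 := by nlinarith [Nat.le_self_pow two_ne_zero N]

open scoped Pointwise in
/-- The triples `(y, b, c)` with `b, c ∈ F(N)`, `y ∈ F(N) - F(N)` and `y ^ 2 + 4 * b * c = Δ`.
A matrix `!![a, b; c, d]` of discriminant `Δ` with entries in `F(N)` gives one, with
`y = a - d`. -/
noncomputable def discrTriples (N : ℕ) (Δ : ℚ) : Finset (ℚ × ℚ × ℚ) :=
  {v ∈ (fareyFinset N - fareyFinset N) ×ˢ fareyFinset N ×ˢ fareyFinset N |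
    v.1 ^ 2 + 4 * (v.2.1 * v.2.2) = Δ}

lemma card_discrTriples_mul_eq_zero_le (N : ℕ) (Δ : ℚ) :
    #{v ∈ discrTriples N Δ | v.2.1 * v.2.2 = 0} ≤ 12 * N ^ 2 := by
  set F := fareyFinset N
  set Y : Finset ℚ := (Polynomial.nthRoots 2 Δ).toFinset
  have card_Y : #Y ≤ 2 := (Multiset.toFinset_card_le _).trans (Polynomial.card_nthRoots 2 Δ)
  have subset : {v ∈ discrTriples N Δ | v.2.1 * v.2.2 = 0} ⊆
      Y ×ˢ ({0} ×ˢ F ∪ F ×ˢ {0}) := by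
    rintro ⟨y, b, c⟩ hv
    obtain ⟨hv, hbc⟩ := mem_filter.1 hv
    obtain ⟨hmem, hΔ⟩ := mem_filter.1 hv
    have hy : y ∈ Y := by
      rw [Multiset.mem_toFinset, Polynomial.mem_nthRoots two_pos, ← hΔ, hbc, mul_zero, add_zero]
    obtain ⟨-, hb, hc⟩ : _ ∧ b ∈ F ∧ c ∈ F := by simpa only [mem_product] using hmem
    rcases mul_eq_zero.1 hbc with rfl | rfl
    · exact mk_mem_product hy (mem_union_left _ (mk_mem_product (mem_singleton_self 0) hc))
    · exact mk_mem_product hy (mem_union_right _ (mk_mem_product hb (mem_singleton_self 0)))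
  calc #{v ∈ discrTriples N Δ | v.2.1 * v.2.2 = 0}
      ≤ #Y * #({0} ×ˢ F ∪ F ×ˢ {0}) := (card_le_card subset).trans_eq (card_product _ _)
    _ ≤ 2 * (#F + #F) := by
        gcongr
        exact (card_union_le _ _).trans_eq (by simp)
    _ ≤ 12 * N ^ 2 := by linarith [card_fareyFinset_le N]

/-- The members `(y, b, c)` of `discrTriples N Δ` with `b * c ≠ 0` whose denominators satisfy
`b.den * c.den = Q`. On this set `Q * (Δ - y ^ 2)` is an integer divisible by `4`. -/
noncomputable def regularTriples (N : ℕ) (Δ : ℚ) (Q : ℕ) : Finset (ℚ × ℚ × ℚ) :=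
  {v ∈ discrTriples N Δ | v.2.1 * v.2.2 ≠ 0 ∧ v.2.1.den * v.2.2.den = Q}

variable {N Q g w : ℕ} {Δ : ℚ} {v : ℚ × ℚ × ℚ}

lemma mul_sub_sq_eq_of_mem_regularTriples (hv : v ∈ regularTriples N Δ Q) :
    Q * (Δ - v.1 ^ 2) = 4 * (v.2.1.num * v.2.2.num) := by
  obtain ⟨hd, -, rfl⟩ := mem_filter.1 hv
  rw [← (mem_filter.1 hd).2, ← Rat.mul_den_eq_num v.2.1, ← Rat.mul_den_eq_num v.2.2]
  push_cast
  ring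

lemma den_fst_le_of_mem_discrTriples (hv : v ∈ discrTriples N Δ) : v.1.den ≤ N ^ 2 := by
  obtain ⟨a, ha, d, hd, hy⟩ := mem_sub.1 (mem_product.1 (mem_filter.1 hv).1).1
  calc v.1.den ≤ a.den * d.den :=
        Nat.le_of_dvd (Nat.mul_pos a.den_pos d.den_pos) (hy ▸ Rat.sub_den_dvd a d)
    _ ≤ N * N := Nat.mul_le_mul (mem_fareyFinset.1 ha).2 (mem_fareyFinset.1 hd).2
    _ = N ^ 2 := (sq N).symm

lemma snd_mem_fareyFinset_of_mem_discrTriples (hv : v ∈ discrTriples N Δ) :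
    v.2.1 ∈ fareyFinset N ∧ v.2.2 ∈ fareyFinset N :=
  mem_product.1 (mem_product.1 (mem_filter.1 hv).1).2

lemma natAbs_num_mul_num_le_of_mem_discrTriples (hv : v ∈ discrTriples N Δ) :
    (v.2.1.num * v.2.2.num).natAbs ≤ N ^ 2 := by
  obtain ⟨hb, hc⟩ := snd_mem_fareyFinset_of_mem_discrTriples hv
  rw [Int.natAbs_mul, sq]
  exact Nat.mul_le_mul (mem_fareyFinset.1 hb).1 (mem_fareyFinset.1 hc).1

lemma den_mul_den_le_of_mem_discrTriples (hv : v ∈ discrTriples N Δ) :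
    v.2.1.den * v.2.2.den ≤ N ^ 2 := by
  obtain ⟨hb, hc⟩ := snd_mem_fareyFinset_of_mem_discrTriples hv
  rw [sq]
  exact Nat.mul_le_mul (mem_fareyFinset.1 hb).2 (mem_fareyFinset.1 hc).2

lemma eq_of_mem_discrTriples {v' : ℚ × ℚ × ℚ} (hv : v ∈ discrTriples N Δ)
    (hv' : v' ∈ discrTriples N Δ) (hy : v.1 = v'.1) (hb : v.2.1 = v'.2.1) (h0 : v.2.1 ≠ 0) :
    v = v' := by
  have h := (mem_filter.1 hv).2.trans (mem_filter.1 hv').2.symm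
  rw [hy, hb] at h
  have hc : v'.2.1 * v.2.2 = v'.2.1 * v'.2.2 := by linarith
  exact Prod.ext hy (Prod.ext hb (mul_left_cancel₀ (hb ▸ h0) hc))

lemma card_regularTriples_fst_eq_le (N : ℕ) (Δ : ℚ) (Q : ℕ) (y : ℚ) :
    #{v ∈ regularTriples N Δ Q | v.1 = y} ≤ 2 * maxCardDivisors (N ^ 2) ^ 2 := by
  set T := {v ∈ regularTriples N Δ Q | v.1 = y}
  rcases T.eq_empty_or_nonempty with hT | ⟨v₀, hv₀⟩
  · simp [hT]
  set P : ℤ := v₀.2.1.num * v₀.2.2.num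
  obtain ⟨hv₀, hy₀⟩ := mem_filter.1 hv₀
  obtain ⟨hd₀, h0, hQ⟩ := mem_filter.1 hv₀
  have num_mul_num : ∀ v ∈ T, v.2.1.num * v.2.2.num = P := fun v hv => by
    obtain ⟨hv, hy⟩ := mem_filter.1 hv
    have h := mul_sub_sq_eq_of_mem_regularTriples hv
    rw [hy, ← hy₀, mul_sub_sq_eq_of_mem_regularTriples hv₀] at h
    exact_mod_cast (mul_left_cancel₀ four_ne_zero h).symm
  have injOn : Set.InjOn (fun v : ℚ × ℚ × ℚ => v.2.1) T := by
    intro v hv v' hv' hb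
    obtain ⟨hv, hy⟩ := mem_filter.1 (mem_coe.1 hv)
    obtain ⟨hv', hy'⟩ := mem_filter.1 (mem_coe.1 hv')
    obtain ⟨hd, hbc, -⟩ := mem_filter.1 hv
    exact eq_of_mem_discrTriples hd (mem_filter.1 hv').1 (hy.trans hy'.symm) hb
      (left_ne_zero_of_mul hbc)
  have hQ0 : Q ≠ 0 := hQ ▸ mul_ne_zero (Rat.den_nz _) (Rat.den_nz _)
  have hP0 : P ≠ 0 := by simpa [P] using h0
  have card_Q : #Q.divisors ≤ maxCardDivisors (N ^ 2) :=
    card_divisors_le_maxCardDivisors (hQ ▸ den_mul_den_le_of_mem_discrTriples hd₀)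
  have card_P : #P.divisors ≤ 2 * maxCardDivisors (N ^ 2) := by
    rw [card_int_divisors]
    gcongr
    exact card_divisors_le_maxCardDivisors (natAbs_num_mul_num_le_of_mem_discrTriples hd₀)
  calc #T = #(T.image fun v => v.2.1) := (card_image_of_injOn injOn).symm
    _ ≤ #Q.divisors * #P.divisors := by
        refine card_le_card_divisors_mul_card_divisors hQ0 hP0 ?_ ?_ <;>
          rw [forall_mem_image] <;> intro v hv
        · exact ⟨_, (mem_filter.1 (mem_filter.1 hv).1).2.2.symm⟩
        · exact ⟨_, (num_mul_num v hv).symm⟩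
    _ ≤ maxCardDivisors (N ^ 2) * (2 * maxCardDivisors (N ^ 2)) := Nat.mul_le_mul card_Q card_P
    _ = 2 * maxCardDivisors (N ^ 2) ^ 2 := by ring

lemma mul_sq_sub_sq_eq_of_mem_regularTriples {v' : ℚ × ℚ × ℚ}
    (hv : v ∈ regularTriples N Δ (w ^ 2 * g)) (hv' : v' ∈ regularTriples N Δ (w ^ 2 * g)) :
    g * ((w * v.1) ^ 2 - (w * v'.1) ^ 2) =
      (4 * (v'.2.1.num * v'.2.2.num - v.2.1.num * v.2.2.num) : ℤ) := by
  have e := mul_sub_sq_eq_of_mem_regularTriples hv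
  have e' := mul_sub_sq_eq_of_mem_regularTriples hv'
  push_cast at e e' ⊢
  linear_combination e' - e

lemma card_image_fst_regularTriples_le (hg : Squarefree g) (hw : w ≠ 0) :
    #((regularTriples N Δ (w ^ 2 * g)).image Prod.fst) ≤
      2 * (maxCardDivisors (N ^ 2) * (3 * (Nat.sqrt (N ^ 2 / g) + 1))) := by
  set s := Nat.sqrt (N ^ 2 / g)
  have hw' : (w : ℚ) ≠ 0 := Nat.cast_ne_zero.2 hw
  rw [← card_image_of_injective _ (mul_right_injective₀ hw'), image_image]
  refine card_le_of_den_sq_sub_sq hg ?_ ?_ ?_ <;> simp only [forall_mem_image, Function.comp_apply]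
  · intro v hv
    refine card_divisors_le_maxCardDivisors ?_
    have den_dvd : (w * v.1).den ∣ v.1.den := by simpa using Rat.mul_den_dvd w v.1
    exact (Nat.le_of_dvd v.1.den_pos den_dvd).trans
      (den_fst_le_of_mem_discrTriples (mem_filter.1 hv).1)
  · intro v hv v' hv'
    rw [mul_sq_sub_sq_eq_of_mem_regularTriples hv hv', Rat.den_intCast]
  · intro v hv v' hv'
    have hP := natAbs_num_mul_num_le_of_mem_discrTriples (mem_filter.1 hv).1
    have hP' := natAbs_num_mul_num_le_of_mem_discrTriples (mem_filter.1 hv').1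
    have le_sq : g * ((w * v.1) ^ 2 - (w * v'.1) ^ 2) ≤ 8 * (N ^ 2 : ℕ) := by
      rw [mul_sq_sub_sq_eq_of_mem_regularTriples hv hv']
      norm_cast
      omega
    have hg0 : 0 < g := Nat.pos_of_ne_zero hg.ne_zero
    have lt_sq : N ^ 2 < g * (s + 1) ^ 2 := by
      rw [mul_comm]
      exact (Nat.div_lt_iff_lt_mul hg0).1 (Nat.lt_succ_sqrt' _)
    have hg0' : (0 : ℚ) < g := Nat.cast_pos.2 hg0
    refine lt_of_mul_lt_mul_left ?_ hg0'.le
    calc g * ((w * v.1) ^ 2 - (w * v'.1) ^ 2) ≤ 8 * (N ^ 2 : ℕ) := le_sq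
      _ < 8 * (g * (s + 1) ^ 2 : ℕ) := by gcongr
      _ ≤ g * ((3 * (s + 1) : ℕ) : ℚ) ^ 2 := by
        push_cast
        have : (0 : ℚ) ≤ g * (s + 1) ^ 2 := by positivity
        linarith

lemma card_regularTriples_le (Δ : ℚ) (hg : Squarefree g) (hgN : g ≤ N ^ 2) (hw : w ≠ 0) :
    #(regularTriples N Δ (w ^ 2 * g)) ≤
      24 * maxCardDivisors (N ^ 2) ^ 3 * Nat.sqrt (N ^ 2 / g) := by
  set τ := maxCardDivisors (N ^ 2)
  set s := Nat.sqrt (N ^ 2 / g)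
  have one_le_s : 1 ≤ s :=
    Nat.sqrt_pos.2 (Nat.div_pos hgN (Nat.pos_of_ne_zero hg.ne_zero))
  calc #(regularTriples N Δ (w ^ 2 * g))
      ≤ 2 * τ ^ 2 * #((regularTriples N Δ (w ^ 2 * g)).image Prod.fst) :=
        card_le_mul_card_image _ _ fun y _ => card_regularTriples_fst_eq_le N Δ _ y
    _ ≤ 2 * τ ^ 2 * (2 * (τ * (3 * (s + 1)))) := by
        gcongr
        exact card_image_fst_regularTriples_le hg hw
    _ ≤ 2 * τ ^ 2 * (2 * (τ * (3 * (s + s)))) := by gcongr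
    _ = 24 * τ ^ 3 * s := by ring

lemma filter_discrTriples_subset_biUnion (N : ℕ) (Δ : ℚ) :
    {v ∈ discrTriples N Δ | v.2.1 * v.2.2 ≠ 0} ⊆
      {g ∈ Icc 1 (N ^ 2) | Squarefree g}.biUnion fun g =>
        (Icc 1 (Nat.sqrt (N ^ 2 / g))).biUnion fun w => regularTriples N Δ (w ^ 2 * g) := by
  intro v hv
  obtain ⟨hv, h0⟩ := mem_filter.1 hv
  have hQ := den_mul_den_le_of_mem_discrTriples hv
  obtain ⟨g, w, hg0, hw0, hQ_eq, hg⟩ :=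
    Nat.sq_mul_squarefree_of_pos (Nat.mul_pos v.2.1.den_pos v.2.2.den_pos)
  rw [← hQ_eq] at hQ
  simp only [mem_biUnion, mem_filter, mem_Icc]
  refine ⟨g, ⟨⟨hg0, ?_⟩, hg⟩, w, ⟨hw0, ?_⟩, mem_filter.2 ⟨hv, h0, hQ_eq.symm⟩⟩
  · exact (Nat.le_mul_of_pos_left g (by positivity)).trans hQ
  · exact Nat.le_sqrt'.2 ((Nat.le_div_iff_mul_le hg0).2 hQ)

lemma card_discrTriples_mul_ne_zero_le (N : ℕ) (Δ : ℚ) :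
    #{v ∈ discrTriples N Δ | v.2.1 * v.2.2 ≠ 0} ≤
      24 * maxCardDivisors (N ^ 2) ^ 3 * ∑ g ∈ Icc 1 (N ^ 2), N ^ 2 / g := by
  set τ := maxCardDivisors (N ^ 2)
  calc #{v ∈ discrTriples N Δ | v.2.1 * v.2.2 ≠ 0}
      ≤ ∑ g ∈ Icc 1 (N ^ 2) with Squarefree g, ∑ w ∈ Icc 1 (Nat.sqrt (N ^ 2 / g)),
          #(regularTriples N Δ (w ^ 2 * g)) :=
        (card_le_card (filter_discrTriples_subset_biUnion N Δ)).trans <|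
          card_biUnion_le.trans <| sum_le_sum fun _ _ => card_biUnion_le
    _ ≤ ∑ g ∈ Icc 1 (N ^ 2) with Squarefree g, 24 * τ ^ 3 * (N ^ 2 / g) := by
        refine sum_le_sum fun g hg => ?_
        obtain ⟨hgN, hg⟩ := mem_filter.1 hg
        set s := Nat.sqrt (N ^ 2 / g)
        calc ∑ w ∈ Icc 1 s, #(regularTriples N Δ (w ^ 2 * g))
            ≤ #(Icc 1 s) * (24 * τ ^ 3 * s) := sum_le_card_nsmul _ _ _ fun w hw =>
              card_regularTriples_le Δ hg (mem_Icc.1 hgN).2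
                (Nat.one_le_iff_ne_zero.1 (mem_Icc.1 hw).1)
          _ = 24 * τ ^ 3 * s ^ 2 := by rw [Nat.card_Icc, Nat.add_sub_cancel]; ring
          _ ≤ 24 * τ ^ 3 * (N ^ 2 / g) := by gcongr; exact Nat.sqrt_le' _
    _ ≤ 24 * τ ^ 3 * ∑ g ∈ Icc 1 (N ^ 2), N ^ 2 / g := by
        rw [← mul_sum]
        gcongr
        exact filter_subset _ _

lemma sum_Icc_div_le_mul_one_add_log (X : ℕ) :
    ((∑ g ∈ Icc 1 X, X / g : ℕ) : ℝ) ≤ X * (1 + Real.log X) := by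
  calc ((∑ g ∈ Icc 1 X, X / g : ℕ) : ℝ) ≤ ∑ g ∈ Icc 1 X, (X : ℝ) * (g : ℝ)⁻¹ := by
        rw [Nat.cast_sum]
        exact sum_le_sum fun g _ => Nat.cast_div_le.trans_eq (div_eq_mul_inv _ _)
    _ = X * (harmonic X : ℝ) := by rw [← mul_sum, harmonic_eq_sum_Icc]; push_cast; rfl
    _ ≤ X * (1 + Real.log X) := by gcongr; exact harmonic_le_one_add_log X

lemma card_discrTriples_le (N : ℕ) (Δ : ℚ) :
    (#(discrTriples N Δ) : ℝ) ≤ 12 * (N ^ 2 : ℕ) +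
      24 * maxCardDivisors (N ^ 2) ^ 3 * ((N ^ 2 : ℕ) * (1 + Real.log (N ^ 2 : ℕ))) := by
  have regular : (#{v ∈ discrTriples N Δ | v.2.1 * v.2.2 ≠ 0} : ℝ) ≤
      24 * maxCardDivisors (N ^ 2) ^ 3 * (∑ g ∈ Icc 1 (N ^ 2), N ^ 2 / g : ℕ) := by
    exact_mod_cast card_discrTriples_mul_ne_zero_le N Δ
  rw [← card_filter_add_card_filter_not (fun v => v.2.1 * v.2.2 = 0), Nat.cast_add]
  refine add_le_add (mod_cast card_discrTriples_mul_eq_zero_le N Δ) (regular.trans ?_)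
  gcongr
  exact sum_Icc_div_le_mul_one_add_log (N ^ 2)

lemma exists_card_discrTriples_le_rpow {ε : ℝ} (hε : 0 < ε) :
    ∃ C ≥ (0 : ℝ), ∀ (N : ℕ) (Δ : ℚ), (#(discrTriples N Δ) : ℝ) ≤ C * (N : ℝ) ^ (2 + ε) := by
  set δ := ε / 8 with hδ_def
  have hδ : 0 < δ := by positivity
  obtain ⟨C, hC0, hC⟩ := exists_maxCardDivisors_le_rpow hδ
  refine ⟨12 + 24 * C ^ 3 * (1 + δ⁻¹), by positivity, fun N Δ => ?_⟩
  refine (card_discrTriples_le N Δ).trans ?_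
  rcases N.eq_zero_or_pos with rfl | hN
  · simp [Real.zero_rpow (by positivity : 2 + ε ≠ 0)]
  set X := N ^ 2
  set h : ℝ := (X : ℝ) ^ δ
  have one_le_h : 1 ≤ h := Real.one_le_rpow (mod_cast Nat.one_le_pow 2 N hN) hδ.le
  have log_le : Real.log X ≤ δ⁻¹ * h :=
    (Real.log_le_rpow_div X.cast_nonneg hδ).trans_eq (div_eq_inv_mul _ _)
  have pow_eq : X * h ^ 4 = (N : ℝ) ^ (2 + ε) := by
    have exponent : ((2 : ℕ) : ℝ) * (δ * (4 : ℕ)) = ε := by rw [hδ_def]; push_cast; ring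
    rw [← Real.rpow_mul_natCast X.cast_nonneg, Nat.cast_pow, ← Real.rpow_natCast_mul N.cast_nonneg,
      exponent, Real.rpow_add (Nat.cast_pos.2 hN), Real.rpow_two]
  calc (12 : ℝ) * X + 24 * maxCardDivisors X ^ 3 * (X * (1 + Real.log X))
      ≤ 12 * (X * h ^ 4) + 24 * (C * h) ^ 3 * (X * (h + δ⁻¹ * h)) := by
        gcongr
        · exact le_mul_of_one_le_right X.cast_nonneg (one_le_pow₀ one_le_h)
        · exact hC X
    _ = (12 + 24 * C ^ 3 * (1 + δ⁻¹)) * (X * h ^ 4) := by ring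
    _ = (12 + 24 * C ^ 3 * (1 + δ⁻¹)) * (N : ℝ) ^ (2 + ε) := by rw [pow_eq]

end DiscriminantTriples

section Charpoly

lemma discr_fin_two_eq_sq_add {R : Type*} [CommRing R] (A : Matrix (Fin 2) (Fin 2) R) :
    A.discr = (A 0 0 - A 1 1) ^ 2 + 4 * (A 0 1 * A 1 0) := by
  rw [Matrix.discr_fin_two, Matrix.trace_fin_two, Matrix.det_fin_two]
  ring

lemma injOn_sub_of_charpoly_eq {K : Type*} [Field K] [NeZero (2 : K)] (f : Polynomial K) :
    Set.InjOn (fun A : Matrix (Fin 2) (Fin 2) K => (A 0 0 - A 1 1, A 0 1, A 1 0))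
      {A | A.charpoly = f} := by
  intro A hA B hB h
  obtain ⟨hsub, h01, h10⟩ : A 0 0 - A 1 1 = B 0 0 - B 1 1 ∧ A 0 1 = B 0 1 ∧ A 1 0 = B 1 0 := by
    simpa only [Prod.mk.injEq] using h
  have hadd : A 0 0 + A 1 1 = B 0 0 + B 1 1 := by
    rw [← Matrix.trace_fin_two, ← Matrix.trace_fin_two, A.trace_eq_neg_charpoly_coeff,
      B.trace_eq_neg_charpoly_coeff, hA, hB]
  have h00 : A 0 0 = B 0 0 :=
    mul_left_cancel₀ two_ne_zero (by linear_combination hadd + hsub)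
  have h11 : A 1 1 = B 1 1 := by linear_combination hadd - h00
  exact Matrix.ext fun i j => by fin_cases i <;> fin_cases j <;> assumption

lemma mem_fareyFinset_of_mem_farey {H : ℝ} {x : ℚ} (hx : x ∈ Farey H) :
    x ∈ fareyFinset ⌊H⌋₊ :=
  mem_fareyFinset.2 ⟨Nat.le_floor (by simpa only [Nat.cast_natAbs, Int.cast_abs] using hx.1),
    Nat.le_floor hx.2⟩

lemma ncard_farey_charpoly_le (H : ℝ) (f : Polynomial ℚ) :
    Set.ncard {A : Matrix (Fin 2) (Fin 2) ℚ | (∀ i j, A i j ∈ Farey H) ∧ A.charpoly = f} ≤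
      #(discrTriples ⌊H⌋₊ f.discr) := by
  rw [← Set.ncard_coe_finset]
  refine Set.ncard_le_ncard_of_injOn
    (fun A : Matrix (Fin 2) (Fin 2) ℚ => (A 0 0 - A 1 1, A 0 1, A 1 0)) ?_
    ((injOn_sub_of_charpoly_eq f).mono fun A hA => hA.2)
  rintro A ⟨hA, rfl⟩
  have hA' i j := mem_fareyFinset_of_mem_farey (hA i j)
  exact mem_coe.2 <| mem_filter.2
    ⟨mk_mem_product (sub_mem_sub (hA' 0 0) (hA' 1 1)) (mk_mem_product (hA' 0 1) (hA' 1 0)),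
      (discr_fin_two_eq_sq_add A).symm⟩

end Charpoly

theorem stmt6 :
    ∀ ε > (0 : ℝ), ∃ C : ℝ, ∀ H : ℝ, H ≥ 2 →
      ∀ f : Polynomial ℚ, f.Monic → f.natDegree = 2 →
      (Set.ncard {A : Matrix (Fin 2) (Fin 2) ℚ |
          (∀ i j, A i j ∈ Farey H) ∧ A.charpoly = f} : ℝ) ≤
        C * H ^ ((2 : ℝ) + ε) := by
  intro ε hε
  obtain ⟨C, hC0, hC⟩ := exists_card_discrTriples_le_rpow hε
  refine ⟨C, fun H hH f _ _ => ?_⟩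
  calc (Set.ncard {A : Matrix (Fin 2) (Fin 2) ℚ |
          (∀ i j, A i j ∈ Farey H) ∧ A.charpoly = f} : ℝ)
      ≤ #(discrTriples ⌊H⌋₊ f.discr) := mod_cast ncard_farey_charpoly_le H f
    _ ≤ C * (⌊H⌋₊ : ℝ) ^ (2 + ε) := hC _ _
    _ ≤ C * H ^ (2 + ε) := by
        gcongr
        exact Nat.floor_le (by linarith)
end

section
/- Let n ≥ m > 1 be integers. For every ε > 0 there exists a constant C = C(m, n, ε) such that for all real H ≥ 2 the number of m×n matrices with all entries in E(H) and of rank exactly 1 is at most C·H^{n+ε}. -/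
/-- The set of Egyptian (unit) fractions `1/a` with `a` a nonzero integer, `|a| ≤ H`. -/
def Egyptian (H : ℝ) : Set ℚ := {x : ℚ | ∃ a : ℤ, a ≠ 0 ∧ (|a| : ℝ) ≤ H ∧ x = 1 / (a : ℚ)}

/-!
Inverting the entries of an outer product gives an outer product, so the denominators of a
rank-one matrix of unit fractions form an integer matrix with vanishing `2 × 2` minors; by unique
factorization it is an outer product `p i * q j` of integer vectors. Once `p` is fixed, each `q j`
has at most `2 N / |p i|` possible values, for every `i`, where `N = ⌊H⌋`. Transposing if necessary,
there are at least as many coordinates `q j` as `p i`. Using each `p i` for one coordinate of `q`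
and the trivial bound `2 N` for the remaining ones, we find at most `(2 N) ^ card κ * ∏ i, |p i|⁻¹`
vectors `q`; summing over `p` gives a power of a harmonic sum, which is `O(H ^ ε)`.
-/

open Finset

variable {ι κ : Type*}

section OuterProduct

open Matrix

lemma exists_eq_vecMulVec_of_rank_le_one {K : Type*} [Field K] [Fintype κ] {A : Matrix ι κ K}
    (hA : A.rank ≤ 1) : ∃ (u : ι → K) (v : κ → K), A = vecMulVec u v := by
  have : FiniteDimensional K (Submodule.span K (Set.range A.col)) :=
    FiniteDimensional.span_of_finite K (Set.finite_range _)
  rw [rank_eq_finrank_span_cols, finrank_le_one_iff] at hA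
  obtain ⟨u, hu⟩ := hA
  choose v hv using fun j ↦ hu ⟨A.col j, Submodule.subset_span ⟨j, rfl⟩⟩
  refine ⟨u, v, ?_⟩
  ext i j
  have hij : v j * u.1 i = A i j := congrFun (congrArg Subtype.val (hv j)) i
  rw [vecMulVec_apply, mul_comm, hij]

lemma exists_eq_vecMulVec_of_minors_eq {R : Type*} [CommMonoidWithZero R]
    [NormalizedGCDMonoid R] [Finite ι] {a : Matrix ι κ R}
    (ha : ∀ i i' j j', a i j * a i' j' = a i j' * a i' j) :
    ∃ (p : ι → R) (q : κ → R), a = vecMulVec p q := by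
  cases nonempty_fintype ι
  by_cases! h0 : ∀ i j, a i j = 0
  · exact ⟨0, 0, by ext i j; rw [h0, vecMulVec_apply, Pi.zero_apply, zero_mul]⟩
  obtain ⟨i₀, j₀, h0⟩ := h0
  -- Dividing a nonzero column by its gcd makes `p` primitive, so `p i₀` divides row `i₀`.
  obtain ⟨p, hp, hgcd⟩ := univ.extract_gcd (fun i ↦ a i j₀) ⟨i₀, mem_univ i₀⟩
  set g := univ.gcd fun i ↦ a i j₀
  replace hp i : a i j₀ = g * p i := hp i (mem_univ i)
  have hg : g ≠ 0 := left_ne_zero_of_mul (hp i₀ ▸ h0)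
  have hp₀ : p i₀ ≠ 0 := right_ne_zero_of_mul (hp i₀ ▸ h0)
  have hcol i i' j : a i j * p i' = a i' j * p i := by
    apply mul_left_cancel₀ hg
    rw [mul_left_comm, ← hp, ha, hp, mul_assoc, mul_comm (p i)]
  have hdvd j : p i₀ ∣ a i₀ j := by
    have h : p i₀ ∣ univ.gcd fun i ↦ a i₀ j * p i :=
      dvd_gcd fun i _ ↦ hcol i₀ i j ▸ dvd_mul_left _ _
    simpa only [hgcd, mul_one] using h.trans (gcd_mul_left' univ p (a i₀ j)).dvd
  choose q hq using hdvd
  refine ⟨p, q, ?_⟩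
  ext i j
  apply mul_right_cancel₀ hp₀
  rw [hcol, hq, vecMulVec_apply]
  ac_rfl

end OuterProduct

section Counting

/-- The nonzero integers of absolute value at most `N`: the possible denominators of a unit
fraction of height at most `N`. -/
noncomputable def nonzeroIcc (N : ℕ) : Finset ℤ := (Icc (-N : ℤ) N).erase 0

lemma mem_nonzeroIcc {N : ℕ} {x : ℤ} : x ∈ nonzeroIcc N ↔ x ≠ 0 ∧ x.natAbs ≤ N := by
  rw [nonzeroIcc, mem_erase, mem_Icc]
  omega

lemma card_nonzeroIcc (N : ℕ) : #(nonzeroIcc N) = 2 * N := by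
  rw [nonzeroIcc, card_erase_of_mem (by simp), Int.card_Icc]
  omega

lemma sum_nonzeroIcc_inv_natAbs (N : ℕ) :
    ∑ x ∈ nonzeroIcc N, (x.natAbs : ℚ)⁻¹ = 2 * harmonic N := by
  have heven : (fun x : ℤ ↦ (x.natAbs : ℚ)⁻¹).Even := fun x ↦ by simp only [Int.natAbs_neg]
  rw [nonzeroIcc, sum_erase _ (by simp), sum_Icc_of_even_eq_range heven, sum_range_succ']
  simp only [harmonic, nsmul_eq_mul, Int.natAbs_natCast, Int.natAbs_zero, Nat.cast_zero,
    Nat.cast_ofNat, inv_zero, add_zero, sub_zero]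

variable [Fintype ι]

/-- The nonzero integers `y` in `[-N, N]` such that all entries of `y • p` lie in `[-N, N]`: the
possible values of a coordinate of `q` when the outer product of `p` and `q` has height at
most `N`. -/
noncomputable def boundedMultipliers (N : ℕ) (p : ι → ℤ) : Finset ℤ :=
  {y ∈ nonzeroIcc N | ∀ i, (p i * y).natAbs ≤ N}

lemma card_boundedMultipliers_le (N : ℕ) (p : ι → ℤ) : #(boundedMultipliers N p) ≤ 2 * N :=
  (card_filter_le _ _).trans_eq (card_nonzeroIcc N)

lemma card_boundedMultipliers_le_mul_inv (N : ℕ) {p : ι → ℤ} {i : ι} (hi : p i ≠ 0) :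
    (#(boundedMultipliers N p) : ℚ) ≤ 2 * N * ((p i).natAbs : ℚ)⁻¹ := by
  have hsub : boundedMultipliers N p ⊆ nonzeroIcc (N / (p i).natAbs) := fun y hy ↦ by
    obtain ⟨hyN, hy⟩ := mem_filter.1 hy
    refine mem_nonzeroIcc.2 ⟨(mem_nonzeroIcc.1 hyN).1, ?_⟩
    rw [Nat.le_div_iff_mul_le (Int.natAbs_pos.2 hi), mul_comm, ← Int.natAbs_mul]
    exact hy i
  calc (#(boundedMultipliers N p) : ℚ)
      ≤ 2 * (N / (p i).natAbs : ℕ) := by exact_mod_cast card_nonzeroIcc _ ▸ card_le_card hsub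
    _ ≤ 2 * (N / (p i).natAbs) := by gcongr; exact Nat.cast_div_le
    _ = 2 * N * ((p i).natAbs : ℚ)⁻¹ := by ring

lemma card_boundedMultipliers_pow_le (N : ℕ) {p : ι → ℤ} (hp : ∀ i, p i ≠ 0) {n : ℕ}
    (hn : Fintype.card ι ≤ n) :
    (#(boundedMultipliers N p) : ℚ) ^ n ≤ (2 * N) ^ n * ∏ i, ((p i).natAbs : ℚ)⁻¹ := by
  obtain ⟨k, rfl⟩ := Nat.exists_eq_add_of_le hn
  have hcard : (#(boundedMultipliers N p) : ℚ) ≤ 2 * N := by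
    exact_mod_cast card_boundedMultipliers_le N p
  have hprod : (#(boundedMultipliers N p) : ℚ) ^ Fintype.card ι ≤
      (2 * N) ^ Fintype.card ι * ∏ i, ((p i).natAbs : ℚ)⁻¹ := by
    simpa only [prod_const, card_univ, prod_mul_distrib] using
      prod_le_prod (s := univ) (fun _ _ ↦ by positivity)
        fun i _ ↦ card_boundedMultipliers_le_mul_inv N (hp i)
  rw [pow_add, pow_add, mul_right_comm]
  gcongr

variable [DecidableEq ι] [Fintype κ] [DecidableEq κ]

variable (ι κ) in
/-- The pairs of vectors of nonzero integers in `[-N, N]` whose outer product has all its entries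
in `[-N, N]`. It is a dependent sum so that its cardinality is a sum over the first vector. -/
noncomputable def boundedFactorizations (N : ℕ) : Finset (Σ _ : ι → ℤ, κ → ℤ) :=
  (Fintype.piFinset fun _ ↦ nonzeroIcc N).sigma
    fun p ↦ Fintype.piFinset fun _ ↦ boundedMultipliers N p

lemma mk_mem_boundedFactorizations [Nonempty ι] [Nonempty κ] {N : ℕ} {p : ι → ℤ} {q : κ → ℤ}
    (h : ∀ i j, p i * q j ∈ nonzeroIcc N) : ⟨p, q⟩ ∈ boundedFactorizations ι κ N := by
  simp only [mem_nonzeroIcc, mul_ne_zero_iff] at h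
  have hp i : p i ∈ nonzeroIcc N := by
    obtain ⟨⟨hpi, hqj⟩, hN⟩ := h i (Classical.arbitrary κ)
    exact mem_nonzeroIcc.2 ⟨hpi, (Int.natAbs_mul _ _ ▸ Nat.le_mul_of_pos_right _
      (Int.natAbs_pos.2 hqj)).trans hN⟩
  have hq j : q j ∈ nonzeroIcc N := by
    obtain ⟨⟨hpi, hqj⟩, hN⟩ := h (Classical.arbitrary ι) j
    exact mem_nonzeroIcc.2 ⟨hqj, (Int.natAbs_mul _ _ ▸ Nat.le_mul_of_pos_left _
      (Int.natAbs_pos.2 hpi)).trans hN⟩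
  simp only [boundedFactorizations, boundedMultipliers, mem_sigma, Fintype.mem_piFinset,
    mem_filter]
  exact ⟨hp, fun j ↦ ⟨hq j, fun i ↦ (h i j).2⟩⟩

lemma card_boundedFactorizations_le (N : ℕ) (hικ : Fintype.card ι ≤ Fintype.card κ) :
    (#(boundedFactorizations ι κ N) : ℚ) ≤
      (2 * N) ^ Fintype.card κ * (2 * harmonic N) ^ Fintype.card ι := by
  calc (#(boundedFactorizations ι κ N) : ℚ)
      = ∑ p ∈ Fintype.piFinset fun _ : ι ↦ nonzeroIcc N,
          (#(boundedMultipliers N p) : ℚ) ^ Fintype.card κ := by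
        simp [boundedFactorizations, card_sigma]
    _ ≤ ∑ p ∈ Fintype.piFinset fun _ : ι ↦ nonzeroIcc N,
          (2 * N : ℚ) ^ Fintype.card κ * ∏ i, ((p i).natAbs : ℚ)⁻¹ :=
        sum_le_sum fun p hp ↦ card_boundedMultipliers_pow_le N
          (fun i ↦ (mem_nonzeroIcc.1 (Fintype.mem_piFinset.1 hp i)).1) hικ
    _ = (2 * N) ^ Fintype.card κ * ∏ _i : ι, ∑ x ∈ nonzeroIcc N, (x.natAbs : ℚ)⁻¹ := by
        rw [← mul_sum, prod_univ_sum]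
    _ = (2 * N) ^ Fintype.card κ * (2 * harmonic N) ^ Fintype.card ι := by
        rw [sum_nonzeroIcc_inv_natAbs, prod_const, card_univ]

end Counting

lemma exists_one_add_log_pow_le_rpow (m : ℕ) {ε : ℝ} (hε : 0 < ε) :
    ∃ C : ℝ, ∀ H ≥ 1, (1 + Real.log H) ^ m ≤ C * H ^ ε := by
  refine ⟨m.factorial * Real.exp ε / ε ^ m, fun H hH ↦ ?_⟩
  have hlog : 0 ≤ ε * (1 + Real.log H) := by
    have := Real.log_nonneg hH
    positivity
  have hexp : Real.exp (ε * (1 + Real.log H)) = Real.exp ε * H ^ ε := by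
    rw [Real.rpow_def_of_pos (by positivity), ← Real.exp_add]
    ring_nf
  have hpow := Real.pow_div_factorial_le_exp _ hlog m
  rw [hexp, mul_pow, div_le_iff₀ (by positivity)] at hpow
  rw [div_mul_eq_mul_div, le_div_iff₀ (by positivity)]
  linarith

section EgyptianMatrices

lemma mem_egyptian_iff {H : ℝ} {x : ℚ} :
    x ∈ Egyptian H ↔ ∃ a ∈ nonzeroIcc ⌊H⌋₊, x = (a : ℚ)⁻¹ := by
  refine exists_congr fun a ↦ ?_
  rw [mem_nonzeroIcc, and_assoc, one_div]
  refine and_congr_right fun ha ↦ and_congr_left fun _ ↦ ?_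
  rw [Nat.le_floor_iff' (Int.natAbs_ne_zero.2 ha), Nat.cast_natAbs, Int.cast_abs]

variable [Fintype κ]

variable (ι κ) in
/-- The matrices of rank `r` whose entries are unit fractions of height at most `H`; this is
`L_{m,n,r}(ℤ⁻¹; H)` when `ι` and `κ` have `m` and `n` elements. -/
def egyptianMatrices (r : ℕ) (H : ℝ) : Set (Matrix ι κ ℚ) :=
  {A | (∀ i j, A i j ∈ Egyptian H) ∧ A.rank = r}

variable [Fintype ι]

variable (ι κ) in
lemma ncard_egyptianMatrices_comm (r : ℕ) (H : ℝ) :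
    (egyptianMatrices ι κ r H).ncard = (egyptianMatrices κ ι r H).ncard :=
  Set.ncard_congr (fun A _ ↦ A.transpose)
    (fun A hA ↦ ⟨fun i j ↦ hA.1 j i, A.rank_transpose.trans hA.2⟩)
    (fun _ _ _ _ h ↦ Matrix.transpose_injective h)
    (fun A hA ↦ ⟨A.transpose, ⟨fun i j ↦ hA.1 j i, A.rank_transpose.trans hA.2⟩, rfl⟩)

lemma exists_mem_boundedFactorizations_inv_eq [DecidableEq ι] [DecidableEq κ] {H : ℝ}
    {A : Matrix ι κ ℚ} (hA : A ∈ egyptianMatrices ι κ 1 H) :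
    ∃ s ∈ boundedFactorizations ι κ ⌊H⌋₊, Matrix.of (fun i j ↦ (s.1 i * s.2 j : ℚ)⁻¹) = A := by
  obtain ⟨hentry, hrank⟩ := hA
  have : Nonempty ι := Fintype.card_pos_iff.1 (hrank.ge.trans A.rank_le_card_height)
  have : Nonempty κ := Fintype.card_pos_iff.1 (hrank.ge.trans A.rank_le_card_width)
  choose a haN ha using fun i j ↦ mem_egyptian_iff.1 (hentry i j)
  obtain ⟨u, v, rfl⟩ := exists_eq_vecMulVec_of_rank_le_one hrank.le
  have hauv i j : (a i j : ℚ) = (u i)⁻¹ * (v j)⁻¹ := by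
    rw [← mul_inv, ← Matrix.vecMulVec_apply, ha, inv_inv]
  obtain ⟨p, q, hpq⟩ := exists_eq_vecMulVec_of_minors_eq (a := Matrix.of a) fun i i' j j' ↦ by
    have : (a i j * a i' j' : ℚ) = a i j' * a i' j := by simp only [hauv]; ring
    exact_mod_cast this
  replace hpq i j : a i j = p i * q j := congrFun₂ hpq i j
  refine ⟨⟨p, q⟩, mk_mem_boundedFactorizations fun i j ↦ hpq i j ▸ haN i j, ?_⟩
  ext i j
  simp only [ha, hpq, Matrix.of_apply, Int.cast_mul]

lemma ncard_egyptianMatrices_one_le_log (hικ : Fintype.card ι ≤ Fintype.card κ) {H : ℝ}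
    (hH : 1 ≤ H) :
    ((egyptianMatrices ι κ 1 H).ncard : ℝ) ≤
      (2 * H) ^ Fintype.card κ * (2 * (1 + Real.log H)) ^ Fintype.card ι := by
  classical
  have hncard : (egyptianMatrices ι κ 1 H).ncard ≤ #(boundedFactorizations ι κ ⌊H⌋₊) := by
    rw [← Set.ncard_coe_finset]
    refine (Set.ncard_le_ncard (fun A hA ↦ ?_) ((finite_toSet _).image fun s ↦
      Matrix.of fun i j ↦ (s.1 i * s.2 j : ℚ)⁻¹)).trans (Set.ncard_image_le (finite_toSet _))
    exact exists_mem_boundedFactorizations_inv_eq hA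
  have hharmonic : (0 : ℝ) ≤ harmonic ⌊H⌋₊ := by
    exact_mod_cast sum_nonneg fun i _ ↦ by positivity
  calc ((egyptianMatrices ι κ 1 H).ncard : ℝ)
      ≤ #(boundedFactorizations ι κ ⌊H⌋₊) := by exact_mod_cast hncard
    _ ≤ (2 * ⌊H⌋₊) ^ Fintype.card κ * (2 * harmonic ⌊H⌋₊) ^ Fintype.card ι := by
        exact_mod_cast card_boundedFactorizations_le ⌊H⌋₊ hικ
    _ ≤ (2 * H) ^ Fintype.card κ * (2 * (1 + Real.log H)) ^ Fintype.card ι := by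
        gcongr
        · exact Nat.floor_le (zero_le_one.trans hH)
        · exact harmonic_floor_le_one_add_log H hH

lemma exists_ncard_egyptianMatrices_one_le_rpow (hικ : Fintype.card ι ≤ Fintype.card κ) {ε : ℝ}
    (hε : 0 < ε) :
    ∃ C : ℝ, ∀ H ≥ 1, ((egyptianMatrices ι κ 1 H).ncard : ℝ) ≤
      C * H ^ (Fintype.card κ + ε : ℝ) := by
  obtain ⟨C, hC⟩ := exists_one_add_log_pow_le_rpow (Fintype.card ι) hε
  refine ⟨2 ^ Fintype.card κ * 2 ^ Fintype.card ι * C, fun H hH ↦ ?_⟩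
  have hH₀ : 0 < H := by positivity
  calc ((egyptianMatrices ι κ 1 H).ncard : ℝ)
      ≤ (2 * H) ^ Fintype.card κ * (2 * (1 + Real.log H)) ^ Fintype.card ι :=
        ncard_egyptianMatrices_one_le_log hικ hH
    _ = 2 ^ Fintype.card κ * 2 ^ Fintype.card ι * H ^ Fintype.card κ *
          (1 + Real.log H) ^ Fintype.card ι := by
        rw [mul_pow, mul_pow]
        ring
    _ ≤ 2 ^ Fintype.card κ * 2 ^ Fintype.card ι * H ^ Fintype.card κ * (C * H ^ ε) := by
        gcongr
        exact hC H hH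
    _ = 2 ^ Fintype.card κ * 2 ^ Fintype.card ι * C * H ^ (Fintype.card κ + ε : ℝ) := by
        rw [Real.rpow_add hH₀, Real.rpow_natCast]
        ring

end EgyptianMatrices

theorem stmt8_general (ι κ : Type*) [Fintype ι] [Fintype κ] {ε : ℝ} (hε : 0 < ε) :
    ∃ C : ℝ, ∀ H ≥ 1, ((egyptianMatrices ι κ 1 H).ncard : ℝ) ≤
      C * H ^ ((max (Fintype.card ι) (Fintype.card κ) : ℕ) + ε : ℝ) := by
  rcases le_total (Fintype.card ι) (Fintype.card κ) with hικ | hκι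
  · rw [max_eq_right hικ]
    exact exists_ncard_egyptianMatrices_one_le_rpow hικ hε
  · rw [max_eq_left hκι]
    simpa only [ncard_egyptianMatrices_comm ι κ] using
      exists_ncard_egyptianMatrices_one_le_rpow hκι hε

theorem stmt8 (m n : ℕ) (hnm : n ≥ m) (hm : m > 1) :
    ∀ ε > (0 : ℝ), ∃ C : ℝ, ∀ H : ℝ, H ≥ 2 →
      (Set.ncard {A : Matrix (Fin m) (Fin n) ℚ |
          (∀ i j, A i j ∈ Egyptian H) ∧ A.rank = 1} : ℝ) ≤
        C * H ^ ((n : ℝ) + ε) := by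
  intro ε hε
  obtain ⟨C, hC⟩ := stmt8_general (Fin m) (Fin n) hε
  rw [Fintype.card_fin, Fintype.card_fin, max_eq_right hnm] at hC
  exact ⟨C, fun H hH ↦ hC H (one_le_two.trans hH)⟩
end
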